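/- arXiv:2206.09525 — 3 statements merged into one kernel-verified Lean document; each statement's English description precedes it below -/
import Mathlib

section
/- Let n ≥ 1, let v₀,…,v_n be affinely independent points of ℝⁿ with barycentric coordinates λ₀,…,λ_n, let α ∈ 𝕋ⁿ_k, and let 0 ≤ i ≠ j ≤ n with α_j ≥ 1; set β = α + ε_i − ε_j ∈ 𝕋ⁿ_k. Then the divergence of the polynomial vector field x ↦ λ^{α+ε_i}(x)·(v_i − v_j) satisfies (1/(β!·α_j))·div(λ^{α+ε_i} t_{j,i}) = λ^α/α! − λ^β/β!, where t_{j,i} = v_i − v_j. -/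
open scoped BigOperators

/-- An affine map on a finite-dimensional space has its linear part as derivative. -/
theorem AffineMap.hasFDerivAt_toContinuousLinearMap {E : Type*} [NormedAddCommGroup E]
    [NormedSpace ℝ E] [FiniteDimensional ℝ E] (f : E →ᵃ[ℝ] ℝ) (x : E) :
    HasFDerivAt f (LinearMap.toContinuousLinearMap f.linear) x := by
  rw [AffineMap.decomp f]
  exact (LinearMap.toContinuousLinearMap f.linear).hasFDerivAt.add_const (f 0)

/-- The divergence of a scalar function times a constant vector is a directional derivative. -/
theorem sum_fderiv_mul_const_single {ι : Type*} [Fintype ι] [DecidableEq ι]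
    {p : (ι → ℝ) → ℝ} {p' : (ι → ℝ) →L[ℝ] ℝ} {x : ι → ℝ} (hp : HasFDerivAt p p' x)
    (c : ι → ℝ) :
    ∑ m, fderiv ℝ (fun y => p y * c m) x (Pi.single m 1) = p' c := by
  conv_rhs => rw [pi_eq_sum_univ' c, map_sum]
  refine Finset.sum_congr rfl fun m _ => ?_
  rw [(hp.mul_const (c m)).fderiv, map_smul]
  rfl

/-- Raising the exponent at `i` does not affect the factors away from `i`. -/
theorem prod_erase_add_ite {ι R : Type*} [Fintype ι] [DecidableEq ι] [CommMonoid R]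
    (g : ι → ℕ → R) (α : ι → ℕ) (i : ι) :
    (∏ ℓ ∈ Finset.univ.erase i, g ℓ (α ℓ + if ℓ = i then 1 else 0))
      = ∏ ℓ ∈ Finset.univ.erase i, g ℓ (α ℓ) :=
  Finset.prod_congr rfl fun ℓ hℓ => by simp [Finset.ne_of_mem_erase hℓ]

/-- `(α + ε_i)! = (α_i + 1) α!`. -/
theorem prod_factorial_add_ite {ι : Type*} [Fintype ι] [DecidableEq ι] (α : ι → ℕ) (i : ι) :
    (∏ ℓ, (Nat.factorial (α ℓ + if ℓ = i then 1 else 0) : ℝ))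
      = (α i + 1) * ∏ ℓ, (Nat.factorial (α ℓ) : ℝ) := by
  rw [← Finset.mul_prod_erase _ _ (Finset.mem_univ i),
    ← Finset.mul_prod_erase _ (fun ℓ => (Nat.factorial (α ℓ) : ℝ)) (Finset.mem_univ i),
    prod_erase_add_ite (fun _ a => (Nat.factorial a : ℝ)), if_pos rfl, Nat.factorial_succ]
  push_cast
  ring

/-- with `β = α + ε_i − ε_j` (requiring `α_j ≥ 1`),
`(1/(β!·α_j)) · div(λ^{α+ε_i} t_{j,i}) = λ^α/α! − λ^β/β!`, where `t_{j,i} = v_i − v_j`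
and the divergence of the vector field `x ↦ λ^{α+ε_i}(x) • t_{j,i}` is
`∑_m ∂_m (λ^{α+ε_i} (t_{j,i})_m)`. -/
theorem div_bernstein_edge_field
    (n k : ℕ) (hn : 1 ≤ n)
    (v : Fin (n + 1) → (Fin n → ℝ)) (hv : AffineIndependent ℝ v)
    (lam : Fin (n + 1) → ((Fin n → ℝ) →ᵃ[ℝ] ℝ))
    (hlam : ∀ i j, lam i (v j) = if i = j then 1 else 0)
    (hsum : ∀ x : Fin n → ℝ, ∑ i, lam i x = 1)
    (α : Fin (n + 1) → ℕ) (hαk : ∑ i, α i = k)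
    (i j : Fin (n + 1)) (hij : i ≠ j) (hαj : 1 ≤ α j)
    (β : Fin (n + 1) → ℕ)
    (hβ : β = fun ℓ => (α ℓ + if ℓ = i then 1 else 0) - if ℓ = j then 1 else 0)
    (x : Fin n → ℝ) :
    (1 / ((∏ ℓ, (Nat.factorial (β ℓ) : ℝ)) * (α j : ℝ))) *
      (∑ m : Fin n, fderiv ℝ
        (fun y => (∏ ℓ, (lam ℓ y) ^ (α ℓ + if ℓ = i then 1 else 0)) * (v i - v j) m)
        x (Pi.single m 1))
    = (∏ ℓ, (lam ℓ x) ^ (α ℓ)) / (∏ ℓ, (Nat.factorial (α ℓ) : ℝ))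
      - (∏ ℓ, (lam ℓ x) ^ (β ℓ)) / (∏ ℓ, (Nat.factorial (β ℓ) : ℝ)) := by
  have hβα : ∀ ℓ, (α ℓ + if ℓ = i then 1 else 0) = β ℓ + if ℓ = j then 1 else 0 := by
    intro ℓ
    subst hβ
    dsimp only
    split_ifs with h₁ h₂ h₂ <;> first | omega | (subst h₂; omega)
  have hβj : β j + 1 = α j := by
    have := hβα j
    rw [if_neg hij.symm, if_pos rfl] at this
    omega
  have hlin : ∀ ℓ, (lam ℓ).linear (v i - v j)
      = (if ℓ = i then 1 else 0) - if ℓ = j then 1 else 0 := by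
    intro ℓ
    rw [← vsub_eq_sub, AffineMap.linearMap_vsub, hlam, hlam, vsub_eq_sub]
  have hderiv := HasFDerivAt.finsetProd (u := Finset.univ) fun ℓ _ =>
    ((lam ℓ).hasFDerivAt_toContinuousLinearMap x).pow (α ℓ + if ℓ = i then 1 else 0)
  have hdiv : (∑ m : Fin n, fderiv ℝ
        (fun y => (∏ ℓ, (lam ℓ y) ^ (α ℓ + if ℓ = i then 1 else 0)) * (v i - v j) m)
        x (Pi.single m 1))
      = (α i + 1) * (∏ ℓ, (lam ℓ x) ^ (α ℓ)) - α j * ∏ ℓ, (lam ℓ x) ^ (β ℓ) := by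
    have hi := prod_erase_add_ite (fun ℓ a => (lam ℓ x) ^ a) α i
    have hj := prod_erase_add_ite (fun ℓ a => (lam ℓ x) ^ a) β j
    simp only [← hβα] at hj
    rw [sum_fderiv_mul_const_single hderiv,
      ← Finset.mul_prod_erase _ (fun ℓ => (lam ℓ x) ^ (α ℓ)) (Finset.mem_univ i),
      ← Finset.mul_prod_erase _ (fun ℓ => (lam ℓ x) ^ (β ℓ)) (Finset.mem_univ j),
      ← hi, ← hj, ← hβj]
    simp [hlin, mul_sub, Finset.sum_sub_distrib, hij.symm, ← hβj]
    ring
  have hfac : (α i + 1) * ∏ ℓ, (Nat.factorial (α ℓ) : ℝ)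
      = α j * ∏ ℓ, (Nat.factorial (β ℓ) : ℝ) := by
    rw [← prod_factorial_add_ite, ← hβj, Nat.cast_add_one, ← prod_factorial_add_ite]
    simp only [hβα]
  have hα0 : (∏ ℓ, (Nat.factorial (α ℓ) : ℝ)) ≠ 0 :=
    Finset.prod_ne_zero_iff.mpr fun ℓ _ => Nat.cast_ne_zero.mpr (Nat.factorial_ne_zero _)
  have hβ0 : (∏ ℓ, (Nat.factorial (β ℓ) : ℝ)) ≠ 0 :=
    Finset.prod_ne_zero_iff.mpr fun ℓ _ => Nat.cast_ne_zero.mpr (Nat.factorial_ne_zero _)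
  have hαj0 : (α j : ℝ) ≠ 0 := Nat.cast_ne_zero.mpr (by omega)
  rw [hdiv]
  field_simp
  linear_combination (∏ ℓ, (lam ℓ x) ^ (α ℓ)) * hfac
end

section
/- Let n ≥ 2 and m ≥ 0 be integers, and let r₀, r₁, …, r_n be nonnegative integers with r_n = 0, r_{n−1} = m and r_ℓ ≥ 2·r_{ℓ+1} for ℓ = n−2, …, 0. Let k ≥ 2r₀ + 1. Define, for each vertex v ∈ {0,…,n}, S₀({v}) = D({v}, r₀); for 1 ≤ ℓ ≤ n−1 and each subset f of {0,…,n} with |f| = ℓ+1, S_ℓ(f) = D(f, r_ℓ) \ ⋃_{i=0}^{ℓ−1} ⋃_{e ⊆ f, |e| = i+1} D(e, r_i); and S_n = 𝕋ⁿ_k \ ⋃_{i=0}^{n−1} ⋃_{f ⊆ {0,…,n}, |f| = i+1} D(f, r_i). Then the sets S_ℓ(f), ranging over ℓ = 0,…,n−1 and all subsets f with |f| = ℓ+1, together with S_n, are pairwise disjoint and their union is all of 𝕋ⁿ_k. -/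
open scoped BigOperators

/-- The lattice tube `D(f, s)` inside the simplicial lattice `𝕋ⁿ_k`. -/
def latticeTube (n k : ℕ) (f : Finset (Fin (n + 1))) (s : ℕ) : Set (Fin (n + 1) → ℕ) :=
  {α | ∑ i, α i = k ∧ ∑ i ∈ fᶜ, α i ≤ s}

/-- The decomposition sets `S_ℓ(f) = D(f, r_ℓ) \ ⋃_{i<ℓ} ⋃_{e ⊆ f, |e| = i+1} D(e, r_i)`
(for `ℓ = 0` the union is empty, so `S₀({v}) = D({v}, r₀)`). -/
def latticeS (n k : ℕ) (r : ℕ → ℕ) (l : ℕ) (f : Finset (Fin (n + 1))) :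
    Set (Fin (n + 1) → ℕ) :=
  latticeTube n k f (r l) \
    ⋃ i < l, ⋃ e ∈ {e : Finset (Fin (n + 1)) | e ⊆ f ∧ e.card = i + 1},
      latticeTube n k e (r i)

/-- The interior set `S_n = 𝕋ⁿ_k \ ⋃_{i<n} ⋃_{|f| = i+1} D(f, r_i)`. -/
def latticeSTop (n k : ℕ) (r : ℕ → ℕ) : Set (Fin (n + 1) → ℕ) :=
  {α | ∑ i, α i = k} \
    ⋃ i < n, ⋃ f ∈ {f : Finset (Fin (n + 1)) | f.card = i + 1}, latticeTube n k f (r i)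

/-- Radii that at least halve at each step below `N` are antitone up to `N`. -/
lemma radius_antitone {N : ℕ} {r : ℕ → ℕ} (hr : ∀ l < N, 2 * r (l + 1) ≤ r l)
    {i j : ℕ} (hij : i ≤ j) (hj : j ≤ N) : r j ≤ r i := by
  induction j, hij using Nat.le_induction with
  | base => rfl
  | succ j _ ih =>
    have := hr j (by omega)
    have := ih (by omega)
    omega

lemma mem_latticeS {n k : ℕ} {r : ℕ → ℕ} {l : ℕ} {f : Finset (Fin (n + 1))}
    {α : Fin (n + 1) → ℕ} :
    α ∈ latticeS n k r l f ↔ α ∈ latticeTube n k f (r l) ∧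
      ∀ i < l, ∀ e ⊆ f, e.card = i + 1 → α ∉ latticeTube n k e (r i) := by
  simp only [latticeS, Set.mem_sdiff, Set.mem_iUnion, Set.mem_ofPred_eq]
  grind

lemma mem_latticeSTop {n k : ℕ} {r : ℕ → ℕ} {α : Fin (n + 1) → ℕ} :
    α ∈ latticeSTop n k r ↔ ∑ i, α i = k ∧
      ∀ i < n, ∀ f : Finset (Fin (n + 1)), f.card = i + 1 →
        α ∉ latticeTube n k f (r i) := by
  simp [latticeSTop]

/-- The intersection of two tubes lies in the tube around the intersection of the faces, with the
sum of the radii. -/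
lemma latticeTube_inter {n k s t : ℕ} {f g : Finset (Fin (n + 1))} {α : Fin (n + 1) → ℕ}
    (hf : α ∈ latticeTube n k f s) (hg : α ∈ latticeTube n k g t) :
    α ∈ latticeTube n k (f ∩ g) (s + t) := by
  refine ⟨hf.1, ?_⟩
  rw [Finset.compl_inter]
  have := Finset.sum_union_inter (s₁ := fᶜ) (s₂ := gᶜ) (f := α)
  have := hf.2
  have := hg.2
  omega

lemma latticeTube_mono {n k s t : ℕ} (f : Finset (Fin (n + 1))) (hst : s ≤ t) :
    latticeTube n k f s ⊆ latticeTube n k f t :=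
  fun _ h => ⟨h.1, h.2.trans hst⟩

lemma disjoint_latticeS_of_le {n k N : ℕ} {r : ℕ → ℕ}
    (hr : ∀ l < N, 2 * r (l + 1) ≤ r l) (hk : 2 * r 0 < k) {l₁ l₂ : ℕ}
    (hl : l₁ ≤ l₂) (hl₂ : l₂ ≤ N) {f₁ f₂ : Finset (Fin (n + 1))}
    (hf₁ : f₁.card = l₁ + 1) (hf₂ : f₂.card = l₂ + 1) (hne : f₁ ≠ f₂) :
    Disjoint (latticeS n k r l₁ f₁) (latticeS n k r l₂ f₂) := by
  rw [Set.disjoint_left]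
  intro α h₁ h₂
  rw [mem_latticeS] at h₁ h₂
  by_cases hsub : f₁ ⊆ f₂
  · have := Finset.card_lt_card (hsub.ssubset_of_ne hne)
    exact h₂.2 l₁ (by omega) f₁ hsub hf₁ h₁.1
  have hlt : (f₁ ∩ f₂).card < f₁.card :=
    Finset.card_lt_card (Finset.inter_subset_left.ssubset_of_ne
      fun h => hsub (Finset.inter_eq_left.mp h))
  have hmem := latticeTube_inter h₁.1 h₂.1
  have hr₂ : r l₂ ≤ r l₁ := radius_antitone hr hl hl₂
  rcases Nat.eq_zero_or_pos (f₁ ∩ f₂).card with h0 | hpos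
  · rw [Finset.card_eq_zero.mp h0] at hmem
    obtain ⟨hsum, hle⟩ := hmem
    rw [Finset.compl_empty, hsum] at hle
    have := radius_antitone hr (Nat.zero_le l₁) (hl.trans hl₂)
    omega
  · obtain ⟨i, hi⟩ := Nat.exists_eq_succ_of_ne_zero hpos.ne'
    have hil : i < l₁ := by omega
    have hr₁ : r l₁ ≤ r (i + 1) := radius_antitone hr hil (hl.trans hl₂)
    have hri := hr i (by omega)
    exact h₁.2 i hil _ Finset.inter_subset_left hi (latticeTube_mono _ (by omega) hmem)

/-- A lattice point in some tube lies in the decomposition set of a tube of least dimension. -/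
lemma exists_mem_latticeS {n k : ℕ} {r : ℕ → ℕ} {α : Fin (n + 1) → ℕ} {l : ℕ}
    {f : Finset (Fin (n + 1))} (hf : f.card = l + 1) (hα : α ∈ latticeTube n k f (r l)) :
    ∃ i ≤ l, ∃ e : Finset (Fin (n + 1)), e.card = i + 1 ∧ α ∈ latticeS n k r i e := by
  induction l using Nat.strong_induction_on generalizing f with
  | _ l ih =>
    by_cases h : ∃ i < l, ∃ e : Finset (Fin (n + 1)),
        e.card = i + 1 ∧ α ∈ latticeTube n k e (r i)
    · obtain ⟨i, hi, e, he, hαe⟩ := h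
      obtain ⟨j, hj, g, hg⟩ := ih i hi he hαe
      exact ⟨j, hj.trans hi.le, g, hg⟩
    · exact ⟨l, le_rfl, f, hf, mem_latticeS.mpr
        ⟨hα, fun i hi e _ he hαe => h ⟨i, hi, e, he, hαe⟩⟩⟩

/-- the sets `S_ℓ(f)` (`ℓ = 0,…,n−1`, `|f| = ℓ+1`) together with `S_n` are
pairwise disjoint and their union is the whole simplicial lattice `𝕋ⁿ_k`. -/
theorem lattice_decomposition
    (n : ℕ) (hn : 2 ≤ n) (m : ℕ) (r : ℕ → ℕ)
    (hrn : r n = 0) (hrn1 : r (n - 1) = m)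
    (hrdec : ∀ l, l ≤ n - 2 → 2 * r (l + 1) ≤ r l)
    (k : ℕ) (hk : 2 * r 0 + 1 ≤ k) :
    (∀ l₁ l₂ : ℕ, l₁ ≤ n - 1 → l₂ ≤ n - 1 →
      ∀ f₁ f₂ : Finset (Fin (n + 1)), f₁.card = l₁ + 1 → f₂.card = l₂ + 1 →
        (l₁, f₁) ≠ (l₂, f₂) →
        Disjoint (latticeS n k r l₁ f₁) (latticeS n k r l₂ f₂)) ∧
    (∀ l ≤ n - 1, ∀ f : Finset (Fin (n + 1)), f.card = l + 1 →
        Disjoint (latticeS n k r l f) (latticeSTop n k r)) ∧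
    ((⋃ l ≤ n - 1, ⋃ f ∈ {f : Finset (Fin (n + 1)) | f.card = l + 1}, latticeS n k r l f)
        ∪ latticeSTop n k r
      = {α : Fin (n + 1) → ℕ | ∑ i, α i = k}) := by
  have hr : ∀ l < n - 1, 2 * r (l + 1) ≤ r l := fun l hl => hrdec l (by omega)
  refine ⟨?_, ?_, ?_⟩
  · intro l₁ l₂ hl₁ hl₂ f₁ f₂ hf₁ hf₂ hne
    have hf : f₁ ≠ f₂ := by
      rintro rfl
      exact hne (by rw [show l₁ = l₂ by omega])
    rcases le_total l₁ l₂ with hl | hl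
    · exact disjoint_latticeS_of_le hr hk hl hl₂ hf₁ hf₂ hf
    · exact (disjoint_latticeS_of_le hr hk hl hl₁ hf₂ hf₁ hf.symm).symm
  · intro l hl f hf
    rw [Set.disjoint_left]
    intro α hα hTop
    exact (mem_latticeSTop.mp hTop).2 l (by omega) f hf (mem_latticeS.mp hα).1
  · ext α
    simp only [Set.mem_union, Set.mem_iUnion, Set.mem_ofPred_eq, exists_prop]
    constructor
    · rintro (⟨l, -, f, -, hα⟩ | hα)
      · exact (mem_latticeS.mp hα).1.1
      · exact (mem_latticeSTop.mp hα).1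
    · intro hα
      by_cases h : α ∈ latticeSTop n k r
      · exact Or.inr h
      · left
        simp only [mem_latticeSTop, hα, true_and, not_forall, not_not] at h
        obtain ⟨l, hl, f, hf, hαf⟩ := h
        obtain ⟨i, hi, e, he⟩ := exists_mem_latticeS hf hαf
        exact ⟨i, by omega, e, he⟩
end

section
/- Let T ⊂ ℝ³ be a tetrahedron with affinely independent vertices v₀, v₁, v₂, v₃. Let r^v ≥ −1 be an integer, set r₂ = (r^v, −1, −1), and let k ≥ max(2r^v + 1, 1); set r₃ = r₂ ⊖ 1 = (max(r^v−1,−1), −1, −1). Assume S₃(T, r₃, k−1) is nonempty. Then {div u : u ∈ 𝔹_k^{div}(T; r₂)} = {p ∈ B_{k−1}(T; r₃) : ∫_T p dx = 0}, where 𝔹_k^{div}(T; r₂) = {u ∈ 𝔹_k³(T; r₂) : u·n = 0 on ∂T}. -/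
open scoped BigOperators
open MeasureTheory

/-- The interior lattice set `S₃(T, r, k)` for a smoothness vector `r = (rᵛ, rᵉ, r^f)`. -/
def interiorLattice (k : ℕ) (rv re rf : ℤ) : Set (Fin 4 → ℕ) :=
  {α | ∑ i, α i = k ∧ ∀ f : Finset (Fin 4), f.Nonempty → f ≠ Finset.univ →
    ((f.card = 1 → rv < ∑ i ∈ fᶜ, (α i : ℤ)) ∧
     (f.card = 2 → re < ∑ i ∈ fᶜ, (α i : ℤ)) ∧
     (f.card = 3 → rf < ∑ i ∈ fᶜ, (α i : ℤ)))}

/-- The Bernstein monomial `λ^α` on `ℝ³`. -/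
def bernBary3 (lam : Fin 4 → ((Fin 3 → ℝ) →ᵃ[ℝ] ℝ)) (α : Fin 4 → ℕ) :
    (Fin 3 → ℝ) → ℝ :=
  fun x => ∏ i, (lam i x) ^ (α i)

/-- The bubble space `B_k(T; r) = span{λ^α : α ∈ S₃(T, r, k)}`. -/
def bubbleSpace (lam : Fin 4 → ((Fin 3 → ℝ) →ᵃ[ℝ] ℝ)) (k : ℕ) (rv re rf : ℤ) :
    Submodule ℝ ((Fin 3 → ℝ) → ℝ) :=
  Submodule.span ℝ (bernBary3 lam '' interiorLattice k rv re rf)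

/-- The divergence `div u = ∂₁u₁ + ∂₂u₂ + ∂₃u₃` of a vector field on `ℝ³`. -/
noncomputable def diverg (u : (Fin 3 → ℝ) → (Fin 3 → ℝ)) : (Fin 3 → ℝ) → ℝ :=
  fun x => ∑ m, fderiv ℝ (fun y => u y m) x (Pi.single m 1)

/-- Vanishing of the normal trace `u ⋅ n = 0` on `∂T` for the tetrahedron with vertices
`v₀, …, v₃`: on each face (the convex hull of the three vertices `v_i`, `i ≠ j`), `u` is
orthogonal to every vector `w` normal to that face. -/
def normalTraceZero (v : Fin 4 → (Fin 3 → ℝ)) (u : (Fin 3 → ℝ) → (Fin 3 → ℝ)) : Prop :=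
  ∀ j : Fin 4, ∀ x ∈ convexHull ℝ (v '' {i | i ≠ j}), ∀ w : Fin 3 → ℝ,
    (∀ a, a ≠ j → ∀ b, b ≠ j → ∑ m, w m * (v a m - v b m) = 0) →
    ∑ m, w m * u x m = 0

/-- The unit simplex `{y | 0 ≤ y, ∑ y ≤ 1}` of `ℝ³`. -/
def unitSimplex : Set (Fin 3 → ℝ) := {y | (∀ m, 0 ≤ y m) ∧ ∑ m, y m ≤ 1}

lemma isClosed_unitSimplex : IsClosed unitSimplex := by
  have h1 : IsClosed {y : Fin 3 → ℝ | ∀ m, 0 ≤ y m} := by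
    simp only [Set.ofPred_forall]
    exact isClosed_iInter fun m => isClosed_le continuous_const (continuous_apply m)
  have h2 : IsClosed {y : Fin 3 → ℝ | ∑ m, y m ≤ 1} :=
    isClosed_le (by fun_prop) continuous_const
  exact h1.inter h2

lemma isCompact_unitSimplex : IsCompact unitSimplex := by
  refine (isCompact_Icc (a := (0 : Fin 3 → ℝ)) (b := 1)).of_isClosed_subset
    isClosed_unitSimplex fun y hy => ⟨hy.1, fun m => ?_⟩
  exact (Finset.single_le_sum (fun i _ => hy.1 i) (Finset.mem_univ m)).trans hy.2

/-- A function vanishing on the faces `y₀ = 0` and `∑ y = 1` of the unit simplex has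
a mean-zero derivative in the direction `e₀`. -/
lemma integral_unitSimplex_fderiv_eq_zero (G : (Fin 3 → ℝ) → ℝ) (hG : ContDiff ℝ 1 G)
    (h0 : ∀ y ∈ unitSimplex, y 0 = 0 → G y = 0)
    (h1 : ∀ y ∈ unitSimplex, ∑ m, y m = 1 → G y = 0) :
    ∫ y in unitSimplex, fderiv ℝ G y (Pi.single 0 1) = 0 := by
  have hc : Continuous fun y => fderiv ℝ G y (Pi.single 0 1) :=
    (hG.continuous_fderiv one_ne_zero).clm_apply continuous_const
  have hint : Integrable (unitSimplex.indicator fun y => fderiv ℝ G y (Pi.single 0 1)) :=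
    (hc.continuousOn.integrableOn_compact isCompact_unitSimplex).integrable_indicator
      isClosed_unitSimplex.measurableSet
  rw [← integral_indicator isClosed_unitSimplex.measurableSet]
  have hmp := (volume_preserving_piFinSuccAbove (fun _ : Fin 3 => ℝ) 0).symm
  rw [← hmp.integral_comp']
  have hint' := (hmp.integrable_comp_emb (MeasurableEquiv.measurableEmbedding _)).2 hint
  rw [Measure.volume_eq_prod, integral_prod_symm _ (by exact hint')]
  refine integral_eq_zero_of_ae (Filter.Eventually.of_forall fun z => ?_)
  have hmem : ∀ t : ℝ, (Fin.cons t z : Fin 3 → ℝ) ∈ unitSimplex ↔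
      (∀ m, 0 ≤ z m) ∧ t ∈ Set.Icc 0 (1 - ∑ m, z m) := by
    intro t
    simp only [unitSimplex, Set.mem_ofPred_eq, Fin.forall_fin_succ, Fin.sum_univ_succ,
      Fin.cons_zero, Fin.cons_succ, Set.mem_Icc]
    grind
  have hd : ∀ t : ℝ, HasDerivAt (fun s : ℝ => G (Fin.cons s z))
      (fderiv ℝ G (Fin.cons t z) (Pi.single 0 1)) t := by
    intro t
    refine (hG.differentiable one_ne_zero _).hasFDerivAt.comp_hasDerivAt t ?_
    rw [hasDerivAt_pi]
    intro m
    refine Fin.cases ?_ (fun m => ?_) m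
    · simpa using hasDerivAt_id' t
    · simpa using hasDerivAt_const t (z m)
  change ∫ t : ℝ, unitSimplex.indicator (fun y => fderiv ℝ G y (Pi.single 0 1))
    (Fin.insertNth 0 t z) = 0
  simp only [Fin.insertNth_zero']
  by_cases hz : (∀ m, 0 ≤ z m) ∧ 0 ≤ 1 - ∑ m, z m
  · have heq : (fun t : ℝ => unitSimplex.indicator (fun y => fderiv ℝ G y (Pi.single 0 1))
        (Fin.cons t z : Fin 3 → ℝ)) = (Set.Icc 0 (1 - ∑ m, z m)).indicator
          fun t => fderiv ℝ G (Fin.cons t z) (Pi.single 0 1) := by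
      ext t
      simp only [Set.indicator, hmem, hz.1, implies_true, true_and]
    rw [heq, integral_indicator measurableSet_Icc, integral_Icc_eq_integral_Ioc,
      ← intervalIntegral.integral_of_le hz.2,
      intervalIntegral.integral_eq_sub_of_hasDerivAt (fun t _ => hd t)]
    · rw [h1, h0, sub_zero]
      · exact (hmem _).2 ⟨hz.1, le_rfl, hz.2⟩
      · simp
      · exact (hmem _).2 ⟨hz.1, hz.2, le_rfl⟩
      · simp [Fin.sum_univ_succ]
    · refine Continuous.intervalIntegrable ?_ _ _
      refine hc.comp (continuous_pi fun m => ?_)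
      refine Fin.cases ?_ (fun m => ?_) m
      · simpa using continuous_id'
      · simpa using continuous_const
  · refine integral_eq_zero_of_ae (Filter.Eventually.of_forall fun t => ?_)
    refine Set.indicator_of_notMem (fun ht => hz ?_) _
    rw [hmem] at ht
    exact ⟨ht.1, ht.2.1.trans ht.2.2⟩

/-- The affine parametrization of a tetrahedron by the unit simplex. -/
def simplexParam (v : Fin 4 → (Fin 3 → ℝ)) (y : Fin 3 → ℝ) : Fin 3 → ℝ :=
  v 0 + ∑ m, y m • (v m.succ - v 0)

lemma coord_simplexParam (b : AffineBasis (Fin 4) ℝ (Fin 3 → ℝ)) (i : Fin 4) (y : Fin 3 → ℝ) :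
    b.coord i (simplexParam b y) = (Fin.cons (1 - ∑ m, y m) y : Fin 4 → ℝ) i := by
  have h : simplexParam b y = (∑ m, y m • (b m.succ - b 0)) +ᵥ b 0 := by
    simp [simplexParam, add_comm]
  have hl : ∀ m : Fin 3, (b.coord i).linear (b m.succ - b 0) =
      b.coord i (b m.succ) - b.coord i (b 0) := fun m => (b.coord i).linearMap_vsub _ _
  rw [h, AffineMap.map_vadd, map_sum]
  simp only [map_smul, hl, smul_eq_mul, vadd_eq_add, AffineBasis.coord_apply]
  refine Fin.cases ?_ (fun l => ?_) i
  · simp [Fin.succ_ne_zero, eq_comm]; ring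
  · simp [Fin.succ_ne_zero]

lemma simplexParam_image (b : AffineBasis (Fin 4) ℝ (Fin 3 → ℝ)) :
    simplexParam b '' unitSimplex = convexHull ℝ (Set.range b) := by
  rw [AffineBasis.convexHull_eq_nonneg_coord]
  ext x
  constructor
  · rintro ⟨y, hy, rfl⟩ i
    rw [coord_simplexParam]
    refine Fin.cases ?_ (fun l => ?_) i
    · simpa using hy.2
    · simpa using hy.1 l
  · intro hx
    have hs := b.sum_coord_apply_eq_one x
    rw [Fin.sum_univ_succ] at hs
    refine ⟨fun m => b.coord m.succ x, ⟨fun m => hx _, ?_⟩, ?_⟩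
    · linarith [hx 0]
    · refine b.ext_elem fun i => ?_
      rw [coord_simplexParam]
      refine Fin.cases ?_ (fun l => ?_) i
      · simp; linarith
      · simp

lemma simplexParam_injective (b : AffineBasis (Fin 4) ℝ (Fin 3 → ℝ)) :
    Function.Injective (simplexParam b) := by
  intro y z h
  ext m
  have := congrArg (b.coord m.succ) h
  simpa [coord_simplexParam] using this

lemma hasFDerivAt_simplexParam (v : Fin 4 → (Fin 3 → ℝ)) (y : Fin 3 → ℝ) :
    HasFDerivAt (simplexParam v)
      (∑ m, (ContinuousLinearMap.proj (R := ℝ) (φ := fun _ : Fin 3 => ℝ) m).smulRight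
        (v m.succ - v 0)) y := by
  refine HasFDerivAt.const_add _ (HasFDerivAt.fun_sum fun m _ => ?_)
  exact (ContinuousLinearMap.proj (R := ℝ) (φ := fun _ : Fin 3 => ℝ) m).hasFDerivAt.smul_const _

/-- A function vanishing on the faces opposite to `b i` and `b j` has a mean-zero derivative
in the direction `b j - b i`. -/
lemma integral_fderiv_edge_eq_zero (b : AffineBasis (Fin 4) ℝ (Fin 3 → ℝ)) {i j : Fin 4}
    (hij : i ≠ j) (g : (Fin 3 → ℝ) → ℝ) (hg : ContDiff ℝ 1 g)
    (hi : ∀ x, b.coord i x = 0 → g x = 0) (hj : ∀ x, b.coord j x = 0 → g x = 0) :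
    ∫ x in convexHull ℝ (Set.range b), fderiv ℝ g x (b j - b i) = 0 := by
  obtain ⟨σ, hσ0, hσ1⟩ : ∃ σ : Equiv.Perm (Fin 4), σ 0 = i ∧ σ 1 = j := by
    clear hi hj
    revert i j
    decide
  subst hσ0 hσ1
  set c : AffineBasis (Fin 4) ℝ (Fin 3 → ℝ) := b.reindex σ.symm with hc
  have hcv : ⇑c = b ∘ σ := by
    ext m
    simp [hc, AffineBasis.reindex_apply]
  have hrange : Set.range b = Set.range c := by
    rw [hcv, σ.surjective.range_comp]
  rw [hrange, ← simplexParam_image, integral_image_eq_integral_abs_det_fderiv_smul volume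
    isClosed_unitSimplex.measurableSet
    (fun y _ => (hasFDerivAt_simplexParam c y).hasFDerivWithinAt)
    (simplexParam_injective c).injOn]
  simp only [smul_eq_mul]
  rw [integral_const_mul]
  have hcd : ContDiff ℝ 1 (simplexParam c) := by unfold simplexParam; fun_prop
  have h := integral_unitSimplex_fderiv_eq_zero (g ∘ simplexParam c) (hg.comp hcd)
    (fun y _ h => hj _ ?_) (fun y _ h => hi _ ?_)
  · rw [mul_eq_zero]
    right
    rw [← h]
    congr 1 with y
    rw [((hg.differentiable one_ne_zero _).hasFDerivAt.comp y
      (hasFDerivAt_simplexParam c y)).fderiv]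
    simp [hcv, Pi.single_apply]
  · have := coord_simplexParam c 1 y
    simp only [hc, AffineBasis.coord_reindex, Equiv.symm_symm] at this ⊢
    rw [this, ← h]; rfl
  · have := coord_simplexParam c 0 y
    simp only [hc, AffineBasis.coord_reindex, Equiv.symm_symm] at this ⊢
    rw [this]; simp [h]

section Polynomials

open MvPolynomial

lemma mem_interiorLattice_iff {k : ℕ} {rv : ℤ} {α : Fin 4 → ℕ} :
    α ∈ interiorLattice k rv (-1) (-1) ↔ ∑ i, α i = k ∧ ∀ i, (α i : ℤ) + rv < k := by
  have hcompl : ∀ i, ∑ l, α l = k → ∑ l ∈ ({i} : Finset (Fin 4))ᶜ, (α l : ℤ) = k - α i := by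
    intro i h
    have := Finset.sum_add_sum_compl ({i} : Finset (Fin 4)) fun l => (α l : ℤ)
    rw [← h]
    push_cast
    rw [Finset.sum_singleton] at this
    linarith
  constructor
  · rintro ⟨h, hf⟩
    refine ⟨h, fun i => ?_⟩
    have := (hf {i} (Finset.singleton_nonempty i) (by revert i; decide)).1 (by simp)
    rw [hcompl i h] at this
    linarith
  · rintro ⟨h, hf⟩
    have hpos : ∀ f : Finset (Fin 4), (-1 : ℤ) < ∑ i ∈ fᶜ, (α i : ℤ) := fun f =>
      lt_of_lt_of_le (by norm_num) (Finset.sum_nonneg fun i _ => Int.natCast_nonneg _)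
    refine ⟨h, fun f _ _ => ⟨fun hc => ?_, fun _ => hpos f, fun _ => hpos f⟩⟩
    obtain ⟨i, rfl⟩ := Finset.card_eq_one.1 hc
    rw [hcompl i h]
    linarith [hf i]

/-- Polynomials in the barycentric coordinates representing `B_k(T; (rᵛ, -1, -1))`. -/
noncomputable def bubblePoly (k : ℕ) (rv : ℤ) : Submodule ℝ (MvPolynomial (Fin 4) ℝ) :=
  restrictSupport ℝ {α | ⇑α ∈ interiorLattice k rv (-1) (-1)}

/-- Substitution of the barycentric coordinates into a polynomial. -/
noncomputable def baryEval (lam : Fin 4 → ((Fin 3 → ℝ) →ᵃ[ℝ] ℝ)) :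
    MvPolynomial (Fin 4) ℝ →ₗ[ℝ] ((Fin 3 → ℝ) → ℝ) :=
  LinearMap.pi fun x => (aeval fun i => lam i x).toLinearMap

lemma baryEval_apply (lam : Fin 4 → ((Fin 3 → ℝ) →ᵃ[ℝ] ℝ)) (P : MvPolynomial (Fin 4) ℝ)
    (x : Fin 3 → ℝ) : baryEval lam P x = eval (fun i => lam i x) P := by
  simp [baryEval, aeval_eq_eval]

lemma baryEval_monomial (lam : Fin 4 → ((Fin 3 → ℝ) →ᵃ[ℝ] ℝ)) (α : Fin 4 →₀ ℕ) :
    baryEval lam (monomial α 1) = bernBary3 lam α := by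
  ext x
  simp [baryEval_apply, eval_monomial, bernBary3, Finsupp.prod_fintype]

lemma map_bubblePoly (lam : Fin 4 → ((Fin 3 → ℝ) →ᵃ[ℝ] ℝ)) (k : ℕ) (rv : ℤ) :
    (bubblePoly k rv).map (baryEval lam) = bubbleSpace lam k rv (-1) (-1) := by
  rw [bubblePoly, restrictSupport_eq_span, Submodule.map_span, bubbleSpace, Set.image_image]
  congr 1
  ext g
  constructor
  · rintro ⟨α, hα, rfl⟩
    exact ⟨α, hα, (baryEval_monomial lam α).symm⟩
  · rintro ⟨α, hα, rfl⟩
    exact ⟨Finsupp.equivFunOnFinite.symm α, hα, baryEval_monomial lam _⟩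

lemma pderiv_mem_bubblePoly {k : ℕ} {rv : ℤ} (hk : 1 ≤ k) (i : Fin 4)
    {P : MvPolynomial (Fin 4) ℝ} (hP : P ∈ bubblePoly k rv) :
    pderiv i P ∈ bubblePoly (k - 1) (max (rv - 1) (-1)) := by
  suffices bubblePoly k rv ≤
      (bubblePoly (k - 1) (max (rv - 1) (-1))).comap (pderiv i).toLinearMap from this hP
  rw [bubblePoly, restrictSupport_eq_span, Submodule.span_le]
  rintro _ ⟨α, hα, rfl⟩
  change pderiv i (monomial α 1) ∈ bubblePoly _ _
  rw [pderiv_monomial, bubblePoly, monomial_mem_restrictSupport]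
  by_cases hi : α i = 0
  · simp [hi]
  left
  obtain ⟨hs, hb⟩ := mem_interiorLattice_iff.1 hα
  refine mem_interiorLattice_iff.2 ?_
  have hval : ∀ l, (α - Finsupp.single i 1 : Fin 4 →₀ ℕ) l = if l = i then α l - 1 else α l := by
    intro l
    by_cases h : l = i <;> simp [h]
  simp only [hval]
  have hsum : ∑ l, (if l = i then α l - 1 else α l) = k - 1 := by
    rw [← Finset.add_sum_erase _ _ (Finset.mem_univ i)] at hs ⊢
    have : ∑ l ∈ Finset.univ.erase i, (if l = i then α l - 1 else α l) =
        ∑ l ∈ Finset.univ.erase i, α l :=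
      Finset.sum_congr rfl fun l hl => if_neg (Finset.ne_of_mem_erase hl)
    rw [this, if_pos rfl]
    omega
  refine ⟨hsum, fun l => ?_⟩
  have hle : (if l = i then α l - 1 else α l) ≤ k - 1 :=
    hsum ▸ Finset.single_le_sum (f := fun l => if l = i then α l - 1 else α l)
      (fun _ _ => Nat.zero_le _) (Finset.mem_univ l)
  have := hb l
  split_ifs at hle ⊢ <;> omega

lemma eval_smul_of_mem_bubblePoly {k : ℕ} {rv : ℤ} {P : MvPolynomial (Fin 4) ℝ}
    (hP : P ∈ bubblePoly k rv) (c : ℝ) (y : Fin 4 → ℝ) :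
    eval (c • y) P = c ^ k * eval y P := by
  rw [bubblePoly, restrictSupport_eq_span] at hP
  induction hP using Submodule.span_induction with
  | mem P h =>
    obtain ⟨α, hα, rfl⟩ := h
    have hs : ∑ i, α i = k := (mem_interiorLattice_iff.1 hα).1
    simp [eval_monomial, Finsupp.prod_fintype, mul_pow, Finset.prod_mul_distrib,
      Finset.prod_pow_eq_pow_sum, hs]
  | zero => simp
  | add P Q _ _ hP hQ => simp [hP, hQ, mul_add]
  | smul a P _ hP => simp [smul_eval, hP]; ring

lemma X_dvd_of_eval_eq_zero {j : Fin 4} {P : MvPolynomial (Fin 4) ℝ}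
    (h : ∀ y : Fin 4 → ℝ, y j = 0 → (∀ i, i ≠ j → 0 < y i) → eval y P = 0) : X j ∣ P := by
  let s : MvPolynomial (Fin 4) ℝ →ₐ[ℝ] MvPolynomial (Fin 4) ℝ :=
    aeval fun i => if i = j then 0 else X i
  have hdvd : ∀ Q, X j ∣ Q - s Q := by
    intro Q
    induction Q using MvPolynomial.induction_on with
    | C a => simp [s]
    | add p q hp hq =>
      rw [map_add, add_sub_add_comm]
      exact dvd_add hp hq
    | mul_X p i hp =>
      have : p * X i - s (p * X i) = (p - s p) * X i + s p * (X i - s (X i)) := by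
        rw [map_mul]; ring
      rw [this]
      refine dvd_add (hp.mul_right _) (Dvd.dvd.mul_left ?_ _)
      by_cases hi : i = j
      · subst hi; simp [s]
      · simp [s, hi]
  have hs : s P = 0 := by
    refine funext_set (fun _ => Set.Ioi (0 : ℝ)) (fun _ => Set.Ioi_infinite 0) fun y hy => ?_
    have hcomp : eval y (s P) = eval (fun i => if i = j then 0 else y i) P := by
      have : (aeval y).comp s = (aeval (fun i => if i = j then 0 else y i) :
          MvPolynomial (Fin 4) ℝ →ₐ[ℝ] ℝ) := by
        ext i
        by_cases hi : i = j <;> simp [s, hi]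
      simpa [aeval_eq_eval] using congrArg (fun f => f P) this
    rw [hcomp, map_zero]
    refine h _ (by simp) fun i hi => ?_
    simpa [hi] using hy i (Set.mem_univ i)
  simpa [hs] using hdvd P

variable (b : AffineBasis (Fin 4) ℝ (Fin 3 → ℝ))

lemma hasFDerivAt_baryEval (lam : Fin 4 → ((Fin 3 → ℝ) →ᵃ[ℝ] ℝ))
    (P : MvPolynomial (Fin 4) ℝ) (x : Fin 3 → ℝ) :
    HasFDerivAt (baryEval lam P)
      (∑ i, baryEval lam (pderiv i P) x • (lam i).linear.toContinuousLinearMap) x := by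
  have hlam : ∀ i, HasFDerivAt (lam i) (lam i).linear.toContinuousLinearMap x := by
    intro i
    have : ⇑(lam i) = fun y => (lam i).linear.toContinuousLinearMap y + lam i 0 := by
      ext y
      exact congrFun (lam i).decomp y
    rw [this]
    exact (ContinuousLinearMap.hasFDerivAt _).add_const _
  induction P using MvPolynomial.induction_on with
  | C a =>
    have : baryEval lam (C a) = fun _ => a := by ext y; simp [baryEval_apply]
    rw [this]
    simpa using hasFDerivAt_const a x
  | add p q hp hq =>
    rw [map_add]
    refine (hp.add hq).congr_fderiv ?_
    simp [add_smul, Finset.sum_add_distrib]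
  | mul_X p j hp =>
    have : baryEval lam (p * X j) = fun y => baryEval lam p y * lam j y := by
      ext y; simp [baryEval_apply]
    rw [this]
    refine (hp.mul (hlam j)).congr_fderiv ?_
    ext w
    simp [baryEval_apply, pderiv_X, Pi.single_apply, add_mul, Finset.sum_add_distrib,
      Finset.mul_sum, apply_ite, ite_mul, mul_assoc]

lemma contDiff_baryEval (lam : Fin 4 → ((Fin 3 → ℝ) →ᵃ[ℝ] ℝ)) (P : MvPolynomial (Fin 4) ℝ) :
    ContDiff ℝ 1 (baryEval lam P) := by
  have hlam : ∀ i, ContDiff ℝ 1 (lam i) := by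
    intro i
    rw [(lam i).decomp]
    exact (lam i).linear.toContinuousLinearMap.contDiff.add contDiff_const
  induction P using MvPolynomial.induction_on with
  | C a =>
    have : baryEval lam (C a) = fun _ => a := by ext y; simp [baryEval_apply]
    rw [this]
    exact contDiff_const
  | add p q hp hq =>
    rw [map_add]
    exact hp.add hq
  | mul_X p j hp =>
    have : baryEval lam (p * X j) = fun y => baryEval lam p y * lam j y := by
      ext y; simp [baryEval_apply]
    rw [this]
    exact hp.mul (hlam j)

lemma coord_linear_sub (i j l : Fin 4) :
    (b.coord l).linear (b j - b i) = (if l = j then 1 else 0) - (if l = i then 1 else 0) := by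
  rw [← b.coord_apply, ← b.coord_apply]
  exact (b.coord l).linearMap_vsub _ _

lemma integrableOn_baryEval (P : MvPolynomial (Fin 4) ℝ) :
    IntegrableOn (baryEval b.coord P) (convexHull ℝ (Set.range b)) :=
  (contDiff_baryEval _ P).continuous.continuousOn.integrableOn_compact
    ((Set.finite_range b).isCompact_convexHull ℝ)

/-- The integral over the tetrahedron of a polynomial in the barycentric coordinates. -/
noncomputable def baryIntegral : MvPolynomial (Fin 4) ℝ →ₗ[ℝ] ℝ where
  toFun P := ∫ x in convexHull ℝ (Set.range b), baryEval b.coord P x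
  map_add' P Q := by
    simp only [map_add, Pi.add_apply]
    exact integral_add (integrableOn_baryEval b P) (integrableOn_baryEval b Q)
  map_smul' a P := by
    simp only [map_smul, Pi.smul_apply, RingHom.id_apply]
    exact integral_smul a _

lemma baryIntegral_apply (P : MvPolynomial (Fin 4) ℝ) :
    baryIntegral b P = ∫ x in convexHull ℝ (Set.range b), baryEval b.coord P x := rfl

lemma baryIntegral_pderiv_monomial_eq {α : Fin 4 →₀ ℕ} {i j : Fin 4} (hi : α i ≠ 0)
    (hj : α j ≠ 0) :
    baryIntegral b (pderiv i (monomial α 1)) = baryIntegral b (pderiv j (monomial α 1)) := by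
  by_cases hij : i = j
  · rw [hij]
  have hvan : ∀ l, α l ≠ 0 → ∀ x, b.coord l x = 0 →
      baryEval b.coord (monomial α 1) x = 0 := by
    intro l hl x hx
    rw [baryEval_monomial]
    refine Finset.prod_eq_zero (Finset.mem_univ l) ?_
    rw [hx, zero_pow hl]
  have h := integral_fderiv_edge_eq_zero b hij (baryEval b.coord (monomial α 1))
    (contDiff_baryEval _ _) (hvan i hi) (hvan j hj)
  have hpt : ∀ x, fderiv ℝ (baryEval b.coord (monomial α 1)) x (b j - b i) =
      baryEval b.coord (pderiv j (monomial α 1) - pderiv i (monomial α 1)) x := by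
    intro x
    rw [(hasFDerivAt_baryEval _ _ x).fderiv]
    simp only [_root_.sum_apply, _root_.smul_apply,
      LinearMap.coe_toContinuousLinearMap', coord_linear_sub, smul_eq_mul, mul_sub, mul_ite,
      mul_one, mul_zero, Finset.sum_sub_distrib, Finset.sum_ite_eq', Finset.mem_univ, if_true,
      LinearMap.map_sub (baryEval b.coord), Pi.sub_apply]
  simp only [hpt] at h
  rw [← baryIntegral_apply, map_sub, sub_eq_zero] at h
  exact h.symm

lemma baryIntegral_monomial_pos (α : Fin 4 →₀ ℕ) : 0 < baryIntegral b (monomial α 1) := by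
  rw [baryIntegral_apply, setIntegral_pos_iff_support_of_nonneg_ae _ (integrableOn_baryEval b _)]
  · refine (isOpen_interior.measure_pos volume
      ⟨_, b.centroid_mem_interior_convexHull⟩).trans_le (measure_mono fun x hx => ?_)
    refine ⟨?_, interior_subset hx⟩
    rw [b.interior_convexHull] at hx
    rw [baryEval_monomial]
    exact (Finset.prod_pos fun i _ => pow_pos (hx i) _).ne'
  · refine (ae_restrict_iff' ((Set.finite_range b).isCompact_convexHull ℝ).measurableSet).2
      (Filter.Eventually.of_forall fun x hx => ?_)
    rw [b.convexHull_eq_nonneg_coord] at hx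
    rw [baryEval_monomial]
    exact Finset.prod_nonneg fun i _ => pow_nonneg (hx i) _

/-- If `F₀ + F₁ + F₂ + F₃ = 0` and `λ_j` divides `F_j`, then `∑ ∂F_j/∂λ_j` has mean zero. -/
lemma sum_baryIntegral_pderiv_eq_zero {F : Fin 4 → MvPolynomial (Fin 4) ℝ}
    (hF : ∑ j, F j = 0) (hd : ∀ j, X j ∣ F j) :
    baryIntegral b (∑ j, pderiv j (F j)) = 0 := by
  classical
  let J : MvPolynomial (Fin 4) ℝ →ₗ[ℝ] ℝ := (basisMonomials (Fin 4) ℝ).constr ℝ fun α =>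
    if h : ∃ i, α i ≠ 0 then baryIntegral b (pderiv h.choose (monomial α 1)) else 0
  have hJ : ∀ (α : Fin 4 →₀ ℕ) j, α j ≠ 0 →
      baryIntegral b (pderiv j (monomial α 1)) = J (monomial α 1) := by
    intro α j hj
    have h : ∃ i, α i ≠ 0 := ⟨j, hj⟩
    have := (basisMonomials (Fin 4) ℝ).constr_basis ℝ (fun α =>
      if h : ∃ i, α i ≠ 0 then baryIntegral b (pderiv h.choose (monomial α 1)) else 0) α
    rw [coe_basisMonomials] at this
    rw [show J (monomial α 1) = _ from this, dif_pos h]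
    exact baryIntegral_pderiv_monomial_eq b hj h.choose_spec
  have hmul : ∀ j G, baryIntegral b (pderiv j (X j * G)) = J (X j * G) := by
    intro j G
    induction G using MvPolynomial.induction_on' with
    | monomial u a =>
      have : X j * monomial u a = a • monomial (Finsupp.single j 1 + u) (1 : ℝ) := by
        rw [X, monomial_mul, smul_monomial]; simp
      rw [this, Derivation.map_smul, map_smul, map_smul, hJ _ j (by simp)]
    | add p q hp hq => rw [mul_add, map_add, map_add, map_add, hp, hq]
  rw [map_sum]
  calc ∑ j, baryIntegral b (pderiv j (F j)) = ∑ j, J (F j) := by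
        refine Finset.sum_congr rfl fun j _ => ?_
        obtain ⟨G, hG⟩ := hd j
        rw [hG, hmul]
    _ = 0 := by rw [← map_sum, hF, map_zero]

/-- The polynomial `u · ∇λ_j` for the vector field `u` with components `U`. -/
noncomputable def normalComp (U : Fin 3 → MvPolynomial (Fin 4) ℝ) (j : Fin 4) :
    MvPolynomial (Fin 4) ℝ :=
  ∑ m, (b.coord j).linear (Pi.single m 1) • U m

lemma sum_normalComp (U : Fin 3 → MvPolynomial (Fin 4) ℝ) : ∑ j, normalComp b U j = 0 := by
  have h : ∀ w : Fin 3 → ℝ, ∑ j, (b.coord j).linear w = 0 := by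
    intro w
    have hw : ∀ j, (b.coord j).linear w = b.coord j w - b.coord j 0 := fun j => by
      simpa using (b.coord j).linearMap_vsub w 0
    simp only [hw, Finset.sum_sub_distrib, b.sum_coord_apply_eq_one, sub_self]
  simp only [normalComp]
  rw [Finset.sum_comm]
  simp only [← Finset.sum_smul, h, zero_smul, Finset.sum_const_zero]

/-- The divergence, in terms of polynomials in the barycentric coordinates. -/
noncomputable def polyDiv : (Fin 3 → MvPolynomial (Fin 4) ℝ) →ₗ[ℝ] MvPolynomial (Fin 4) ℝ where
  toFun U := ∑ j, pderiv j (normalComp b U j)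
  map_add' U V := by
    simp [normalComp, smul_add, Finset.sum_add_distrib]
  map_smul' a U := by
    simp only [normalComp, Pi.smul_apply, map_sum, Derivation.map_smul, Finset.smul_sum,
      RingHom.id_apply]
    exact Finset.sum_congr rfl fun j _ => Finset.sum_congr rfl fun m _ => smul_comm _ _ _

lemma polyDiv_apply (U : Fin 3 → MvPolynomial (Fin 4) ℝ) :
    polyDiv b U = ∑ j, pderiv j (normalComp b U j) := rfl

lemma diverg_baryEval (U : Fin 3 → MvPolynomial (Fin 4) ℝ) :
    diverg (fun x m => baryEval b.coord (U m) x) = baryEval b.coord (polyDiv b U) := by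
  ext x
  have hd : ∀ m, fderiv ℝ (fun y => baryEval b.coord (U m) y) x (Pi.single m 1) =
      ∑ j, baryEval b.coord (pderiv j (U m)) x * (b.coord j).linear (Pi.single m 1) := by
    intro m
    rw [(hasFDerivAt_baryEval _ (U m) x).fderiv]
    simp
  simp only [diverg, hd, polyDiv_apply, normalComp, map_sum, Derivation.map_smul, map_smul,
    Finset.sum_apply, Pi.smul_apply, smul_eq_mul]
  rw [Finset.sum_comm]
  exact Finset.sum_congr rfl fun j _ => Finset.sum_congr rfl fun m _ => mul_comm _ _

/-- The polynomial vector fields representing `𝔹ᵈⁱᵛ_k(T; (rᵛ, -1, -1))`. -/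
noncomputable def divBubblePoly (k : ℕ) (rv : ℤ) :
    Submodule ℝ (Fin 3 → MvPolynomial (Fin 4) ℝ) where
  carrier := {U | (∀ m, U m ∈ bubblePoly k rv) ∧
    normalTraceZero b fun x m => baryEval b.coord (U m) x}
  zero_mem' := ⟨fun _ => Submodule.zero_mem _, fun j x _ w _ => by simp⟩
  add_mem' {U V} hU hV := ⟨fun m => Submodule.add_mem _ (hU.1 m) (hV.1 m),
    fun j x hx w hw => by
      simp [mul_add, Finset.sum_add_distrib, hU.2 j x hx w hw, hV.2 j x hx w hw]⟩
  smul_mem' a U hU := ⟨fun m => Submodule.smul_mem _ a (hU.1 m), fun j x hx w hw => by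
    simp [mul_left_comm, ← Finset.mul_sum, hU.2 j x hx w hw]⟩

lemma X_dvd_normalComp {k : ℕ} {rv : ℤ} {U : Fin 3 → MvPolynomial (Fin 4) ℝ}
    (hU : U ∈ divBubblePoly b k rv) (j : Fin 4) : X j ∣ normalComp b U j := by
  refine X_dvd_of_eval_eq_zero fun y hyj hy => ?_
  have hmem : normalComp b U j ∈ bubblePoly k rv :=
    Submodule.sum_mem _ fun m _ => Submodule.smul_mem _ _ (hU.1 m)
  have hynn : ∀ i, 0 ≤ y i := fun i => by
    by_cases h : i = j
    · rw [h, hyj]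
    · exact (hy i h).le
  set s := ∑ i, y i with hs
  have hspos : 0 < s := by
    obtain ⟨i, hi⟩ := exists_ne j
    exact Finset.sum_pos' (fun i _ => hynn i) ⟨i, Finset.mem_univ i, hy i hi⟩
  have hw1 : ∑ i, y i / s = 1 := by rw [← Finset.sum_div, div_self hspos.ne']
  set x := Finset.univ.affineCombination ℝ b fun i => y i / s with hx
  have hcoord : ∀ i, b.coord i x = y i / s := fun i =>
    b.coord_apply_combination_of_mem (Finset.mem_univ i) hw1
  have hxface : x ∈ convexHull ℝ (b '' {i | i ≠ j}) := by
    rw [hx, Finset.affineCombination_eq_linear_combination _ _ _ hw1,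
      ← Finset.sum_erase (a := j) Finset.univ (by simp [hyj])]
    refine (convex_convexHull ℝ _).sum_mem (fun i _ => div_nonneg (hynn i) hspos.le) ?_
      fun i hi => subset_convexHull ℝ _ ⟨i, Finset.ne_of_mem_erase hi, rfl⟩
    rw [Finset.sum_erase Finset.univ (by simp [hyj]), hw1]
  have hlin : ∀ w : Fin 3 → ℝ,
      ∑ m, (b.coord j).linear (Pi.single m 1) * w m = (b.coord j).linear w := by
    intro w
    conv_rhs => rw [pi_eq_sum_univ' w]
    simp [map_sum, mul_comm]
  have h := hU.2 j x hxface (fun m => (b.coord j).linear (Pi.single m 1)) fun a ha c hc => by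
    have := hlin (b a - b c)
    rw [coord_linear_sub, if_neg ha.symm, if_neg hc.symm, sub_zero] at this
    simpa using this
  have hy' : y = s • fun i => b.coord i x := by
    ext i
    simp [hcoord, mul_div_cancel₀ _ hspos.ne']
  rw [hy', eval_smul_of_mem_bubblePoly hmem]
  simp only [baryEval_apply] at h
  simp only [normalComp, map_sum, smul_eval, h, mul_zero]

lemma baryIntegral_polyDiv {k : ℕ} {rv : ℤ} {U : Fin 3 → MvPolynomial (Fin 4) ℝ}
    (hU : U ∈ divBubblePoly b k rv) : baryIntegral b (polyDiv b U) = 0 :=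
  sum_baryIntegral_pderiv_eq_zero b (sum_normalComp b U) (X_dvd_normalComp b hU)

lemma polyDiv_mem_bubblePoly {k : ℕ} {rv : ℤ} (hk : 1 ≤ k)
    {U : Fin 3 → MvPolynomial (Fin 4) ℝ} (hU : U ∈ divBubblePoly b k rv) :
    polyDiv b U ∈ bubblePoly (k - 1) (max (rv - 1) (-1)) :=
  Submodule.sum_mem _ fun j _ => pderiv_mem_bubblePoly hk j <|
    Submodule.sum_mem _ fun m _ => Submodule.smul_mem _ _ (hU.1 m)

/-- The bubble `λ^α (v_j - v_i)` along an edge, and its divergence. -/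
lemma pderiv_sub_pderiv_mem_map_polyDiv {k : ℕ} {rv : ℤ} {α : Fin 4 →₀ ℕ}
    (hα : ⇑α ∈ interiorLattice k rv (-1) (-1)) {i j : Fin 4} (hi : α i ≠ 0) (hj : α j ≠ 0) :
    pderiv j (monomial α 1) - pderiv i (monomial α 1) ∈
      (divBubblePoly b k rv).map (polyDiv b) := by
  refine ⟨fun m => (b j - b i) m • monomial α 1, ⟨fun m => ?_, ?_⟩, ?_⟩
  · refine Submodule.smul_mem _ _ ?_
    rw [bubblePoly, monomial_mem_restrictSupport]
    exact Or.inl hα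
  · intro l x hx w hw
    have hxl : b.coord l x = 0 := by
      have hconv : Convex ℝ {x | b.coord l x = 0} := by
        have := (convex_singleton (𝕜 := ℝ) (0 : ℝ)).affine_preimage (b.coord l)
        exact this
      refine convexHull_min ?_ hconv hx
      rintro _ ⟨a, ha, rfl⟩
      exact b.coord_apply_ne (Ne.symm ha)
    have hfac : ∑ m, w m * baryEval b.coord ((b j - b i) m • monomial α 1) x =
        (∑ m, w m * (b j m - b i m)) * baryEval b.coord (monomial α 1) x := by
      simp [Finset.sum_mul, mul_assoc]
    rw [hfac]
    by_cases hl : l = i ∨ l = j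
    · have hαl : α l ≠ 0 := by rcases hl with rfl | rfl <;> assumption
      rw [baryEval_monomial]
      refine mul_eq_zero_of_right _ (Finset.prod_eq_zero (Finset.mem_univ l) ?_)
      rw [hxl, zero_pow hαl]
    · push Not at hl
      rw [hw j hl.2.symm i hl.1.symm, zero_mul]
  · have hlin : ∀ l, ∑ m, (b.coord l).linear (Pi.single m 1) • (b j - b i) m •
        monomial α (1 : ℝ) = (b.coord l).linear (b j - b i) • monomial α (1 : ℝ) := by
      intro l
      conv_rhs => rw [pi_eq_sum_univ' (b j - b i)]
      simp only [map_sum, map_smul, smul_eq_mul, Finset.sum_smul, smul_smul]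
      exact Finset.sum_congr rfl fun m _ => by rw [mul_comm]
    simp only [polyDiv_apply, normalComp, hlin, Derivation.map_smul]
    simp only [coord_linear_sub, sub_smul, ite_smul, one_smul, zero_smul,
      Finset.sum_sub_distrib, Finset.sum_ite_eq', Finset.mem_univ, if_true]

/-- Connectivity of the bounded lattice through moves along edges. -/
lemma exists_monomial_sub_smul_mem {k : ℕ} {rv : ℤ} (hk : 1 ≤ k) {γ : Fin 4 →₀ ℕ}
    (hγ : ⇑γ ∈ interiorLattice (k - 1) (max (rv - 1) (-1)) (-1) (-1)) (n : ℕ)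
    (β : Fin 4 →₀ ℕ) (hβ : ⇑β ∈ interiorLattice (k - 1) (max (rv - 1) (-1)) (-1) (-1))
    (hn : ∑ i, (β i - γ i) = n) :
    ∃ c : ℝ, monomial β 1 - c • monomial γ 1 ∈ (divBubblePoly b k rv).map (polyDiv b) := by
  induction n generalizing β with
  | zero =>
    obtain ⟨hβs, -⟩ := mem_interiorLattice_iff.1 hβ
    obtain ⟨hγs, -⟩ := mem_interiorLattice_iff.1 hγ
    simp only [Fin.sum_univ_four] at hβs hγs hn
    have : β = γ := by
      ext i
      fin_cases i <;> simp <;> omega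
    exact ⟨1, by simp [this]⟩
  | succ n ih =>
    rw [mem_interiorLattice_iff] at hβ hγ
    obtain ⟨i, -, hi⟩ : ∃ i ∈ Finset.univ, γ i < β i := by
      by_contra! h
      rw [Finset.sum_eq_zero fun i hi => Nat.sub_eq_zero_of_le (h i hi)] at hn
      omega
    obtain ⟨j, -, hj⟩ : ∃ j ∈ Finset.univ, β j < γ j := by
      by_contra! h
      have := Finset.sum_lt_sum h ⟨i, Finset.mem_univ i, hi⟩
      omega
    have hij : i ≠ j := by rintro rfl; omega
    set α : Fin 4 →₀ ℕ := β + Finsupp.single j 1 with hα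
    set β' : Fin 4 →₀ ℕ := α - Finsupp.single i 1 with hβ'
    have hαv : ∀ l, α l = if l = j then β l + 1 else β l := fun l => by
      by_cases h : l = j <;> simp [hα, h]
    have hβv : ∀ l, β' l = if l = i then β l - 1 else if l = j then β l + 1 else β l := fun l => by
      by_cases h : l = i
      · subst h; simp [hβ', hαv, hij]
      · simp [hβ', h, hαv]
    have hαβ : α - Finsupp.single j 1 = β := by simp [hα]
    have hαs : ∑ l, α l = k := by
      simp [hα, Finset.sum_add_distrib, hβ.1]
      omega
    have hβs : ∑ l, β' l + 1 = k := by
      have : β' + Finsupp.single i 1 = α := by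
        ext l
        by_cases h : l = i
        · subst h; simp [hβ', hαv, hij]; omega
        · simp [hβ', h]
      rw [← hαs, ← this]
      simp [Finset.sum_add_distrib]
    have hα_mem : ⇑α ∈ interiorLattice k rv (-1) (-1) := by
      refine mem_interiorLattice_iff.2 ⟨hαs, fun l => ?_⟩
      have h1 := hβ.2 l
      have h2 := hγ.2 l
      rw [hαv]
      split_ifs with h
      · subst h; omega
      · omega
    have hβ_mem : ⇑β' ∈ interiorLattice (k - 1) (max (rv - 1) (-1)) (-1) (-1) := by
      refine mem_interiorLattice_iff.2 ⟨by omega, fun l => ?_⟩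
      have h1 := hβ.2 l
      have h2 := hγ.2 l
      rw [hβv]
      split_ifs with h h'
      · omega
      · subst h'; omega
      · omega
    have hdist : ∑ l, (β' l - γ l) = n := by
      have : ∀ l, β l - γ l = (β' l - γ l) + if l = i then 1 else 0 := by
        intro l
        rw [hβv]
        split_ifs with h h'
        · subst h; omega
        · subst h'; omega
        · omega
      rw [Finset.sum_congr rfl fun l _ => this l, Finset.sum_add_distrib] at hn
      simpa using hn
    obtain ⟨c, hc⟩ := ih β' hβ_mem hdist
    have hmove := pderiv_sub_pderiv_mem_map_polyDiv b hα_mem (i := i) (j := j)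
      (by rw [hαv, if_neg hij]; omega) (by rw [hαv, if_pos rfl]; omega)
    rw [pderiv_monomial, pderiv_monomial, hαβ, ← hβ', one_mul, one_mul] at hmove
    have hαj : (α j : ℝ) ≠ 0 := by rw [hαv, if_pos rfl]; positivity
    refine ⟨(α j : ℝ)⁻¹ * α i * c, ?_⟩
    convert Submodule.add_mem _ (Submodule.smul_mem _ (α j : ℝ)⁻¹ hmove)
      (Submodule.smul_mem _ ((α j : ℝ)⁻¹ * α i) hc) using 1
    simp only [smul_sub, smul_monomial, smul_eq_mul, mul_one, inv_mul_cancel₀ hαj]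
    ring

lemma mem_map_polyDiv_of_baryIntegral_eq_zero {k : ℕ} {rv : ℤ} (hk : 1 ≤ k)
    (hS : (interiorLattice (k - 1) (max (rv - 1) (-1)) (-1) (-1)).Nonempty)
    {P : MvPolynomial (Fin 4) ℝ} (hP : P ∈ bubblePoly (k - 1) (max (rv - 1) (-1)))
    (h0 : baryIntegral b P = 0) : P ∈ (divBubblePoly b k rv).map (polyDiv b) := by
  obtain ⟨γ', hγ'⟩ := hS
  obtain ⟨γ, rfl⟩ := Finsupp.equivFunOnFinite.surjective γ'
  have key : ∃ c : ℝ, P - c • monomial γ 1 ∈ (divBubblePoly b k rv).map (polyDiv b) := by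
    clear h0
    rw [bubblePoly, restrictSupport_eq_span] at hP
    induction hP using Submodule.span_induction with
    | mem P h =>
      obtain ⟨β, hβ, rfl⟩ := h
      exact exists_monomial_sub_smul_mem b hk hγ' _ β hβ rfl
    | zero => exact ⟨0, by simp⟩
    | add P Q _ _ hP hQ =>
      obtain ⟨c, hc⟩ := hP
      obtain ⟨d, hd⟩ := hQ
      refine ⟨c + d, ?_⟩
      rw [add_smul, add_sub_add_comm]
      exact Submodule.add_mem _ hc hd
    | smul a P _ hP =>
      obtain ⟨c, hc⟩ := hP
      refine ⟨a * c, ?_⟩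
      rw [mul_smul, ← smul_sub]
      exact Submodule.smul_mem _ a hc
  obtain ⟨c, hc⟩ := key
  have hc0 : c = 0 := by
    obtain ⟨U, hU, hUc⟩ := hc
    have := baryIntegral_polyDiv b hU
    rw [hUc, map_sub, map_smul, h0, zero_sub, neg_eq_zero, smul_eq_mul, mul_eq_zero] at this
    exact this.resolve_right (baryIntegral_monomial_pos b γ).ne'
  simpa [hc0] using hc

end Polynomials

/-- div stability of the `H(div)` bubble space for `r₂ = (rᵛ, −1, −1)`,
`rᵛ ≥ −1`, `k ≥ max(2rᵛ + 1, 1)` and `r₃ = r₂ ⊖ 1 = (max(rᵛ−1, −1), −1, −1)`: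
`div 𝔹ᵈⁱᵛ_k(T; r₂) = 𝔹_{k−1}(T; r₃)/ℝ`, where
`𝔹ᵈⁱᵛ_k(T; r₂) = {u ∈ 𝔹³_k(T; r₂) : u ⋅ n = 0 on ∂T}`. -/
theorem div_bubble_stability_re_neg_one
    (v : Fin 4 → (Fin 3 → ℝ)) (hv : AffineIndependent ℝ v)
    (lam : Fin 4 → ((Fin 3 → ℝ) →ᵃ[ℝ] ℝ))
    (hlam : ∀ i j, lam i (v j) = if i = j then 1 else 0)
    (hsum : ∀ x : Fin 3 → ℝ, ∑ i, lam i x = 1)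
    (rv : ℤ) (hrv : -1 ≤ rv)
    (k : ℕ) (hk1 : 2 * rv + 1 ≤ (k : ℤ)) (hk2 : 1 ≤ k)
    (hS : (interiorLattice (k - 1) (max (rv - 1) (-1)) (-1) (-1)).Nonempty) :
    {p : (Fin 3 → ℝ) → ℝ | ∃ u : (Fin 3 → ℝ) → (Fin 3 → ℝ),
        (∀ m : Fin 3, (fun x => u x m) ∈ bubbleSpace lam k rv (-1) (-1)) ∧
        normalTraceZero v u ∧ p = diverg u}
      = {p : (Fin 3 → ℝ) → ℝ |
          p ∈ bubbleSpace lam (k - 1) (max (rv - 1) (-1)) (-1) (-1) ∧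
          (∫ x in convexHull ℝ (Set.range v), p x) = 0} := by
  obtain ⟨b, rfl⟩ : ∃ b : AffineBasis (Fin 4) ℝ (Fin 3 → ℝ), ⇑b = v :=
    ⟨⟨v, hv, by rw [hv.affineSpan_eq_top_iff_card_eq_finrank_add_one]; simp⟩, rfl⟩
  obtain rfl : lam = b.coord := by
    funext i
    refine AffineMap.ext_on b.tot ?_
    rintro _ ⟨j, rfl⟩
    rw [hlam, b.coord_apply]
  ext p
  simp only [← map_bubblePoly]
  constructor
  · rintro ⟨u, hu, hn, rfl⟩
    choose U hU hUu using hu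
    obtain rfl : u = fun x m => baryEval b.coord (U m) x := by
      ext x m
      exact (congrFun (hUu m) x).symm
    have hmem : U ∈ divBubblePoly b k rv := ⟨hU, hn⟩
    rw [diverg_baryEval]
    exact ⟨⟨_, polyDiv_mem_bubblePoly b hk2 hmem, rfl⟩, baryIntegral_polyDiv b hmem⟩
  · rintro ⟨⟨P, hP, rfl⟩, h0⟩
    obtain ⟨U, hU, rfl⟩ := mem_map_polyDiv_of_baryIntegral_eq_zero b hk2 hS hP h0
    exact ⟨fun x m => baryEval b.coord (U m) x, fun m => ⟨U m, hU.1 m, rfl⟩, hU.2,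
      (diverg_baryEval b U).symm⟩
end
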